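/- arXiv:1911.00785 — 3 statements merged into one kernel-verified Lean document; each statement's English description precedes it below -/
import Mathlib

section
/- Assume an action G ↷ X of a countably infinite group on a compact metrizable space has only finitely many minimal closed G-invariant subsets and has the uniform topological Markov property. Then X has no off-diagonal asymptotic pair (x₁,x₂) such that the orbit closure of x₁ is minimal. -/
open Pointwise

/-- Supremum over `g ∈ K` of `ρ (g • x) (g • y)`. -/
noncomputable def supOf {G X : Type*} [SMul G X] (ρ : X → X → ℝ) (K : Set G) (x y : X) : ℝ :=
  ⨆ g : K, ρ ((g : G) • x) ((g : G) • y)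

/-- `d_K(x,y) = sup_{g ∈ K} d(g x, g y)`. -/
noncomputable def supD {G X : Type*} [SMul G X] [PseudoMetricSpace X] (K : Set G) (x y : X) : ℝ :=
  supOf dist K x y

/-- `B` is an `(ε,δ)`-memory set for `A`. -/
def IsMemorySet (G X : Type*) [SMul G X] [PseudoMetricSpace X] (ε δ : ℝ)
    (A B : Finset G) : Prop :=
  (A : Set G) ⊆ (B : Set G) ∧
    ∀ x y : X, supD ((B : Set G) \ (A : Set G)) x y ≤ δ →
      ∃ z : X, supD (B : Set G) x z ≤ ε ∧ supD (Set.univ \ (A : Set G)) y z ≤ ε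

/-- The topological Markov property. -/
def TMP (G X : Type*) [SMul G X] [PseudoMetricSpace X] : Prop :=
  ∀ ε > (0 : ℝ), ∃ δ > (0 : ℝ), ∀ A : Finset G, ∃ B : Finset G, IsMemorySet G X ε δ A B

/-- The strong topological Markov property. -/
def StrongTMP (G X : Type*) [Group G] [DecidableEq G] [MulAction G X]
    [PseudoMetricSpace X] : Prop :=
  ∀ ε > (0 : ℝ), ∃ δ > (0 : ℝ), ∃ F : Finset G, (1 : G) ∈ F ∧
    ∀ A : Finset G, IsMemorySet G X ε δ A (F * A)

/-- `V` is `B`-separated. -/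
def Separated {G : Type*} [Mul G] (B V : Set G) : Prop :=
  ∀ v₁ ∈ V, ∀ v₂ ∈ V, v₁ ≠ v₂ → Disjoint (B * ({v₁} : Set G)) (B * ({v₂} : Set G))

/-- `B` is a uniform `(ε,δ)`-memory set for `A`. -/
def IsUniformMemorySet (G X : Type*) [Group G] [MulAction G X] [PseudoMetricSpace X]
    (ε δ : ℝ) (A B : Finset G) : Prop :=
  IsMemorySet G X ε δ A B ∧
    ∀ V : Finset G, Separated (B : Set G) (V : Set G) →
      ∀ (xv : G → X) (y : X),
        (∀ v ∈ V, supD (((B : Set G) \ (A : Set G)) * ({v} : Set G)) (xv v) y ≤ δ) →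
        ∃ z : X, (∀ v ∈ V, supD ((B : Set G) * ({v} : Set G)) z (xv v) ≤ ε) ∧
          supD (Set.univ \ ((A : Set G) * (V : Set G))) z y ≤ ε

/-- The uniform topological Markov property. -/
def UniformTMP (G X : Type*) [Group G] [MulAction G X] [PseudoMetricSpace X] : Prop :=
  ∀ ε > (0 : ℝ), ∃ δ > (0 : ℝ), ∀ A : Finset G, ∃ B : Finset G,
    IsUniformMemorySet G X ε δ A B

/-- The uniform strong topological Markov property. -/
def UniformStrongTMP (G X : Type*) [Group G] [DecidableEq G] [MulAction G X]
    [PseudoMetricSpace X] : Prop :=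
  ∀ ε > (0 : ℝ), ∃ δ > (0 : ℝ), ∃ F : Finset G, (1 : G) ∈ F ∧
    ∀ A : Finset G, IsUniformMemorySet G X ε δ A (F * A)

/-- Expansivity of the action. -/
def Expansive (G X : Type*) [SMul G X] [PseudoMetricSpace X] : Prop :=
  ∃ c > (0 : ℝ), ∀ x y : X, x ≠ y → ∃ g : G, dist (g • x) (g • y) > c

/-- `(x,y)` is an asymptotic pair. -/
def Asymptotic (G : Type*) {X : Type*} [SMul G X] [PseudoMetricSpace X] (x y : X) : Prop :=
  ∀ ε > (0 : ℝ), ∃ F : Finset G, ∀ g ∉ F, dist (g • x) (g • y) ≤ ε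

/-- `(S,δ)` pseudo-orbit. -/
def IsPseudoOrbit {G X : Type*} [Mul G] [SMul G X] [PseudoMetricSpace X]
    (S : Finset G) (δ : ℝ) (w : G → X) : Prop :=
  ∀ s ∈ S, ∀ g : G, dist (s • w g) (w (s * g)) < δ

/-- `w` is `ε`-traced by `x`. -/
def Traces {G X : Type*} [SMul G X] [PseudoMetricSpace X] (ε : ℝ) (x : X) (w : G → X) : Prop :=
  ∀ g : G, dist (g • x) (w g) ≤ ε

/-- Pseudo-orbit tracing property. -/
def POTP (G X : Type*) [Mul G] [SMul G X] [PseudoMetricSpace X] : Prop :=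
  ∀ ε > (0 : ℝ), ∃ δ > (0 : ℝ), ∃ S : Finset G, ∀ w : G → X,
    IsPseudoOrbit S δ w → ∃ x : X, Traces ε x w

/-- `J` is an independence set for the tuple `U`. -/
def IndepSet {G X : Type*} [SMul G X] {n : ℕ} (U : Fin n → Set X) (J : Set G) : Prop :=
  ∀ I : Finset G, (I : Set G) ⊆ J → I.Nonempty → ∀ φ : G → Fin n,
    (⋂ s ∈ I, (fun x : X => s • x) ⁻¹' U (φ s)).Nonempty

/-- The tuple `U` has positive independence density. -/
def PosIndepDensity (G : Type*) {X : Type*} [SMul G X] {n : ℕ} (U : Fin n → Set X) : Prop :=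
  ∃ q > (0 : ℝ), ∀ F : Finset G, ∃ J : Finset G, J ⊆ F ∧
    q * (F.card : ℝ) ≤ (J.card : ℝ) ∧ IndepSet U (J : Set G)

/-- Orbit IE-tuple. -/
def IETuple (G : Type*) {X : Type*} [SMul G X] [TopologicalSpace X] {n : ℕ}
    (x : Fin n → X) : Prop :=
  ∀ U : Fin n → Set X, (∀ i, IsOpen (U i)) → (∀ i, x i ∈ U i) → PosIndepDensity G U

/-- Minimality of the action. -/
def MinimalAction (G X : Type*) [SMul G X] [TopologicalSpace X] : Prop :=
  ∀ Y : Set X, IsClosed Y → (∀ g : G, ∀ y ∈ Y, g • y ∈ Y) → Y.Nonempty → Y = Set.univ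

/-- Følner sequence. -/
def FolnerSeq (G : Type*) [Group G] [DecidableEq G] (F : ℕ → Finset G) : Prop :=
  (∀ n, (F n).Nonempty) ∧
    ∀ K : Finset G, Filter.Tendsto
      (fun n => ((symmDiff (K * F n) (F n)).card : ℝ) / ((F n).card : ℝ))
      Filter.atTop (nhds 0)

/-- `Y` is a minimal closed `G`-invariant subset of `X`. -/
def IsMinimalSub (G X : Type*) [SMul G X] [TopologicalSpace X] (Y : Set X) : Prop :=
  Y.Nonempty ∧ IsClosed Y ∧ (∀ g : G, ∀ y ∈ Y, g • y ∈ Y) ∧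
    ∀ Z ⊆ Y, Z.Nonempty → IsClosed Z → (∀ g : G, ∀ z ∈ Z, g • z ∈ Z) → Z = Y

/-!
Suppose `x₁` and `x₂` are distinct. The orbit of `x₁` returns close to `x₁` along a syndetic set of
times, and the uniform TMP allows `x₂` to be spliced in at any chosen subset of a sufficiently
separated syndetic set `V` of such times: every `S ⊆ V` is coded by a point `z` such that `v • z` is
close to `x₂` for `v ∈ S` and close to `x₁` for `v ∈ V \ S`.

A translate `F * {h}` of a suitable finite window `F` leaves room for exponentially many (in `|F|`)
patterns of `S`. Represent each of the finitely many minimal sets by one of its points. The orbits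
of these points, started at any of the at most `|F| ^ 2` relevant positions `e * h` with
`e ∈ F⁻¹ * F`, produce only `O(|F| ^ 2)` patterns there. Hence some `S` differs, within bounded
distance of every `u`, from the patterns of all the representatives started at `u`, and then the
orbit closure of the point `z` coding `S` contains none of the minimal sets, which is absurd.
-/

open Set Filter Topology

section Combinatorics

theorem eventually_mul_pow_lt_pow (a d : ℕ) {b : ℕ} (hb : 1 < b) :
    ∀ᶠ m : ℕ in atTop, a * m ^ d < b ^ m := by
  have hlim : Tendsto (fun m : ℕ ↦ (a : ℝ) * ((m : ℝ) ^ d / (b : ℝ) ^ m)) atTop (𝓝 0) := by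
    simpa using
      (tendsto_pow_const_div_const_pow_of_one_lt d (Nat.one_lt_cast.2 hb)).const_mul (a : ℝ)
  filter_upwards [hlim.eventually_lt_const one_pos] with m hm
  have hpos : (0 : ℝ) < (b : ℝ) ^ m := by positivity
  rw [← mul_div_assoc, div_lt_one hpos] at hm
  exact_mod_cast hm

theorem exists_forall_exists_not_mem_iff_of_card_lt {α J : Type*} [Finite J] {D : Set α}
    (T : J → Set α) (hcard : Nat.card J < 2 ^ D.ncard) :
    ∃ s : Set α, ∀ j, ∃ v ∈ D, ¬(v ∈ s ↔ v ∈ T j) := by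
  by_contra! hcon
  have hsurj : Function.Surjective fun j ↦ ((↑) ⁻¹' T j : Set D) := fun s ↦ by
    obtain ⟨j, hj⟩ := hcon ((↑) '' s)
    refine ⟨j, Set.ext fun v ↦ ?_⟩
    simpa using (hj v v.2).symm
  have : Finite (Set D) := Finite.of_surjective _ hsurj
  have : Finite D := Finite.of_injective (singleton : D → Set D) singleton_injective
  have := Fintype.ofFinite D
  have hle := Nat.card_le_card_of_surjective _ hsurj
  rw [Nat.card_eq_fintype_card (α := Set D), Fintype.card_set, ← Nat.card_eq_fintype_card,
    Nat.card_coe_set_eq] at hle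
  exact hcard.not_ge hle

theorem exists_set_forall_mem_iff_of_pairwiseDisjoint {α ι : Type*} {H : Set ι} {f : ι → Set α}
    (hf : H.PairwiseDisjoint f) (s : ι → Set α) :
    ∃ S : Set α, ∀ h ∈ H, ∀ v ∈ f h, v ∈ S ↔ v ∈ s h := by
  refine ⟨⋃ h ∈ H, f h ∩ s h, fun h hh v hv ↦ ?_⟩
  simp only [mem_iUnion, mem_inter_iff, exists_prop]
  refine ⟨?_, fun hs ↦ ⟨h, hh, hv, hs⟩⟩
  rintro ⟨h', hh', hv', hs⟩
  rwa [hf.elim_set hh hh' v hv hv']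

end Combinatorics

section Separated

variable {G : Type*} {B V : Set G}

theorem Separated.mono [Mul G] {V' : Set G} (hV : Separated B V) (h : V' ⊆ V) : Separated B V' :=
  fun v₁ h₁ v₂ h₂ ↦ hV v₁ (h h₁) v₂ (h h₂)

theorem Separated.pairwiseDisjoint [Mul G] (hV : Separated B V) :
    V.PairwiseDisjoint fun v ↦ B * {v} :=
  fun v₁ h₁ v₂ h₂ ↦ hV v₁ h₁ v₂ h₂

theorem Separated.eq_of_mul_eq_mul [Mul G] (hV : Separated B V) {v₁ v₂ b₁ b₂ : G} (hv₁ : v₁ ∈ V)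
    (hv₂ : v₂ ∈ V) (hb₁ : b₁ ∈ B) (hb₂ : b₂ ∈ B) (h : b₁ * v₁ = b₂ * v₂) : v₁ = v₂ :=
  hV.pairwiseDisjoint.elim_set hv₁ hv₂ (b₁ * v₁) (mul_mem_mul hb₁ rfl) (h ▸ mul_mem_mul hb₂ rfl)

theorem exists_separated_subset_inv_mul_mul [Group G] (hB : B.Nonempty) (R : Set G) :
    ∃ V ⊆ R, Separated B V ∧ R ⊆ B⁻¹ * B * V := by
  -- With constant size function, the Vitali covering lemma is the existence of a maximal subfamily
  -- of pairwise disjoint sets.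
  obtain ⟨V, hVR, hdisj, hmax⟩ := Vitali.exists_disjoint_subfamily_covering_enlargement
    (fun v ↦ B * {v}) R (fun _ ↦ 0) 2 one_lt_two (fun _ _ ↦ le_rfl) 0 (fun _ _ ↦ le_rfl)
    fun _ _ ↦ hB.mul (singleton_nonempty _)
  refine ⟨V, hVR, fun v₁ h₁ v₂ h₂ ↦ hdisj h₁ h₂, fun r hr ↦ ?_⟩
  obtain ⟨v, hv, ⟨_, ⟨b, hb, r, rfl, hbr⟩, ⟨b', hb', v, rfl, hbv⟩⟩, -⟩ := hmax r hr
  refine ⟨b⁻¹ * b', mul_mem_mul (inv_mem_inv.2 hb) hb', v, hv, ?_⟩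
  simp only at hbr hbv ⊢
  rw [mul_assoc, hbv, ← hbr, inv_mul_cancel_left]

end Separated

/-- A subset of a group is syndetic if finitely many of its left translates cover the group. -/
def IsSyndetic {G : Type*} [Mul G] (V : Set G) : Prop :=
  ∃ K : Set G, K.Finite ∧ K * V = univ

namespace IsSyndetic

variable {G : Type*} {R V : Set G}

protected theorem univ [MulOneClass G] : IsSyndetic (univ : Set G) :=
  ⟨{1}, finite_singleton 1, by simp⟩

theorem of_subset_mul [Semigroup G] {C : Set G} (hR : IsSyndetic R) (hC : C.Finite)
    (h : R ⊆ C * V) : IsSyndetic V := by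
  obtain ⟨K, hK, hKR⟩ := hR
  refine ⟨K * C, hK.mul hC, univ_subset_iff.1 ?_⟩
  rw [← hKR, mul_assoc]
  exact mul_subset_mul_left h

theorem infinite [Mul G] [Infinite G] (hV : IsSyndetic V) : V.Infinite := by
  obtain ⟨K, hK, hKV⟩ := hV
  exact fun hfin ↦ infinite_univ (hKV ▸ hK.mul hfin)

theorem exists_separated_subset [Group G] {B : Set G} (hR : IsSyndetic R) (hB : B.Finite)
    (hne : B.Nonempty) : ∃ V ⊆ R, Separated B V ∧ IsSyndetic V := by
  obtain ⟨V, hVR, hsep, hcov⟩ := exists_separated_subset_inv_mul_mul hne R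
  exact ⟨V, hVR, hsep, hR.of_subset_mul (hB.inv.mul hB) hcov⟩

theorem exists_linear_window [Group G] [Infinite G] (hV : IsSyndetic V) :
    ∃ c : ℕ, ∀ m : ℕ, ∃ F : Set G, F.Finite ∧ F.ncard ≤ c * m ∧
      ∀ h, m ≤ (F * {h} ∩ V).ncard := by
  obtain ⟨K, hK, hKV⟩ := hV
  have hKne : K⁻¹.Nonempty := by
    rw [nonempty_inv]
    exact Nonempty.of_mul_left (hKV ▸ univ_nonempty)
  obtain ⟨N, -, hNsep, hN⟩ := IsSyndetic.univ.exists_separated_subset hK.inv hKne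
  refine ⟨K⁻¹.ncard, fun m ↦ ?_⟩
  obtain ⟨t, htN, ht, rfl⟩ := hN.infinite.exists_subset_ncard_eq m
  refine ⟨K⁻¹ * t, hK.inv.mul ht, natCard_mul_le, fun h ↦ ?_⟩
  have hcov : ∀ j, ∃ k ∈ K, ∃ v ∈ V, k * v = j * h := fun j ↦ mem_mul.1 (hKV ▸ mem_univ _)
  choose k hk v hv hkv using hcov
  have hv_eq : ∀ j, v j = (k j)⁻¹ * j * h := fun j ↦ by
    rw [mul_assoc, ← hkv, inv_mul_cancel_left]
  refine ncard_le_ncard_of_injOn v (fun j hj ↦ ⟨?_, hv j⟩) (fun j hj j' hj' heq ↦ ?_)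
    (((hK.inv.mul ht).mul (finite_singleton h)).inter_of_left V)
  · rw [hv_eq]
    exact mul_mem_mul (mul_mem_mul (inv_mem_inv.2 (hk j)) hj) rfl
  · rw [hv_eq, hv_eq, mul_left_inj] at heq
    exact hNsep.eq_of_mul_eq_mul (htN hj) (htN hj') (inv_mem_inv.2 (hk j))
      (inv_mem_inv.2 (hk j')) heq

theorem exists_exponential_window [Group G] [Infinite G] (hV : IsSyndetic V) (a : ℕ) :
    ∃ F : Set G, F.Finite ∧ F.Nonempty ∧ ∀ h, a * F.ncard ^ 2 < 2 ^ (F * {h} ∩ V).ncard := by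
  obtain ⟨c, hc⟩ := hV.exists_linear_window
  obtain ⟨m, hm, hm0⟩ :=
    ((eventually_mul_pow_lt_pow (a * c ^ 2) 2 one_lt_two).and (eventually_gt_atTop 0)).exists
  obtain ⟨F, hF, hFcard, hFV⟩ := hc m
  refine ⟨F, hF, ?_, fun h ↦ ?_⟩
  · have hne := nonempty_of_ncard_ne_zero (hm0.trans_le (hFV 1)).ne'
    exact (hne.mono inter_subset_left).of_mul_left
  · calc a * F.ncard ^ 2 ≤ a * (c * m) ^ 2 := by gcongr
      _ = a * c ^ 2 * m ^ 2 := by ring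
      _ < 2 ^ m := hm
      _ ≤ 2 ^ (F * {h} ∩ V).ncard := Nat.pow_le_pow_right two_pos (hFV h)

theorem exists_set_forall_exists_not_mem_iff [Group G] [Infinite G] {ι : Type*} [Finite ι]
    (hV : IsSyndetic V) (P : ι → Set G) :
    ∃ S W : Set G, W.Finite ∧ ∀ u i, ∃ w ∈ W, w * u ∈ V ∧ ¬(w * u ∈ S ↔ w ∈ P i) := by
  obtain ⟨F, hF, hFne, hFV⟩ := hV.exists_exponential_window (Nat.card ι)
  obtain ⟨H, -, hHsep, hHcov⟩ := exists_separated_subset_inv_mul_mul hFne univ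
  set E : Set G := F⁻¹ * F
  have hEfin : E.Finite := hF.inv.mul hF
  have := hEfin.to_subtype
  have hcard : ∀ h, Nat.card (E × ι) < 2 ^ (F * {h} ∩ V).ncard := fun h ↦ by
    refine lt_of_le_of_lt ?_ (hFV h)
    have hle : Nat.card E ≤ Nat.card ↥F⁻¹ * Nat.card F := natCard_mul_le
    rw [natCard_inv, Nat.card_coe_set_eq F] at hle
    rw [Nat.card_prod, mul_comm, sq]
    exact Nat.mul_le_mul_left _ hle
  choose s hs using fun h ↦ exists_forall_exists_not_mem_iff_of_card_lt
    (fun p : E × ι ↦ {v | v * ((p.1 : G) * h)⁻¹ ∈ P p.2}) (hcard h)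
  obtain ⟨S, hS⟩ := exists_set_forall_mem_iff_of_pairwiseDisjoint hHsep.pairwiseDisjoint s
  refine ⟨S, F * E⁻¹, hF.mul hEfin.inv, fun u i ↦ ?_⟩
  obtain ⟨e, he, h, hh, rfl⟩ := hHcov (mem_univ u)
  obtain ⟨v, ⟨hvF, hvV⟩, hv⟩ := hs h (⟨e, he⟩, i)
  refine ⟨v * (e * h)⁻¹, ?_, ?_⟩
  · obtain ⟨f, hf, _, rfl, rfl⟩ := hvF
    exact ⟨f, hf, e⁻¹, inv_mem_inv.2 he, by group⟩
  · rw [inv_mul_cancel_right]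
    exact ⟨hvV, by rw [hS h hh v hvF]; exact hv⟩

end IsSyndetic

section MinimalSets

variable {G X : Type*} [TopologicalSpace X]

theorem exists_isMinimalSub_subset [SMul G X] [CompactSpace X] {Y : Set X} (hne : Y.Nonempty)
    (hclosed : IsClosed Y) (hinv : ∀ g : G, ∀ y ∈ Y, g • y ∈ Y) :
    ∃ M ⊆ Y, IsMinimalSub G X M := by
  obtain ⟨M, hMY, hM⟩ := zorn_superset_nonempty
    {Z : Set X | Z.Nonempty ∧ IsClosed Z ∧ ∀ g : G, ∀ z ∈ Z, g • z ∈ Z}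
    (fun c hc hchain hcne ↦ by
      have := hcne.to_subtype
      refine ⟨⋂₀ c, ⟨?_, isClosed_sInter fun s hs ↦ (hc hs).2.1,
        fun g y hy s hs ↦ (hc hs).2.2 g y (hy s hs)⟩, fun s hs ↦ sInter_subset_of_mem hs⟩
      have hdir : DirectedOn (· ⊇ ·) c :=
        IsChain.directedOn (r := fun s t : Set X ↦ s ⊇ t) hchain.symm
      exact IsCompact.nonempty_sInter_of_directed_nonempty_isCompact_isClosed hdir
        (fun s hs ↦ (hc hs).1) (fun s hs ↦ (hc hs).2.1.isCompact) fun s hs ↦ (hc hs).2.1)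
    Y ⟨hne, hclosed, hinv⟩
  exact ⟨M, hMY, hM.prop.1, hM.prop.2.1, hM.prop.2.2,
    fun Z hZM h₁ h₂ h₃ ↦ hM.eq_of_subset ⟨h₁, h₂, h₃⟩ hZM⟩

theorem smul_mem_closure_orbit [Monoid G] [MulAction G X] [ContinuousConstSMul G X] {x y : X}
    (g : G) (hy : y ∈ closure (MulAction.orbit G x)) : g • y ∈ closure (MulAction.orbit G x) :=
  smul_closure_orbit_subset g x (smul_mem_smul_set hy)

namespace IsMinimalSub

variable {M : Set X} {x : X}

theorem closure_orbit_eq [Monoid G] [MulAction G X] [ContinuousConstSMul G X]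
    (hM : IsMinimalSub G X M) (hx : x ∈ M) : closure (MulAction.orbit G x) = M :=
  hM.2.2.2 _ (closure_minimal (range_subset_iff.2 fun g ↦ hM.2.2.1 g x hx) hM.2.1)
    (MulAction.nonempty_orbit x).closure isClosed_closure fun g _ ↦ smul_mem_closure_orbit g

theorem isSyndetic_setOf_smul_mem [Group G] [MulAction G X] [ContinuousConstSMul G X]
    (hM : IsMinimalSub G X M) (hMc : IsCompact M) (hx : x ∈ M) {U : Set X} (hU : IsOpen U)
    (hMU : (M ∩ U).Nonempty) : IsSyndetic {g : G | g • x ∈ U} := by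
  have hcov : M ⊆ ⋃ k : G, (k • ·) ⁻¹' U := fun y hy ↦ by
    obtain ⟨p, hpM, hpU⟩ := hMU
    rw [← hM.closure_orbit_eq hy] at hpM
    obtain ⟨_, hkU, k, rfl⟩ := mem_closure_iff.1 hpM U hU hpU
    exact mem_iUnion.2 ⟨k, hkU⟩
  obtain ⟨K, hK⟩ := hMc.elim_finite_subcover _ (fun k ↦ hU.preimage (continuous_const_smul k)) hcov
  refine ⟨(K : Set G)⁻¹, K.finite_toSet.inv, eq_univ_of_forall fun g ↦ ?_⟩
  obtain ⟨k, hk, hkU⟩ := mem_iUnion₂.1 (hK (hM.2.2.1 g x hx))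
  exact ⟨k⁻¹, inv_mem_inv.2 hk, k * g, by simpa [mul_smul] using hkU, inv_mul_cancel_left k g⟩

end IsMinimalSub

end MinimalSets

section PseudoMetric

variable {G X : Type*} [PseudoMetricSpace X]

theorem supD_le_iff [SMul G X] [CompactSpace X] {K : Set G} {x y : X} {c : ℝ} (hc : 0 ≤ c) :
    supD K x y ≤ c ↔ ∀ g ∈ K, dist (g • x) (g • y) ≤ c := by
  refine ⟨fun h g hg ↦ le_trans ?_ h, fun h ↦ Real.iSup_le (fun g ↦ h g g.2) hc⟩
  refine le_ciSup (f := fun g : K ↦ dist ((g : G) • x) ((g : G) • y)) ?_ ⟨g, hg⟩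
  refine ⟨Metric.diam (univ : Set X), forall_mem_range.2 fun _ ↦ ?_⟩
  exact Metric.dist_le_diam_of_mem isCompact_univ.isBounded (mem_univ _) (mem_univ _)

theorem isClosed_setOf_supD_le [SMul G X] [ContinuousConstSMul G X] [CompactSpace X] (K : Set G)
    (y : X) {c : ℝ} (hc : 0 ≤ c) : IsClosed {x : X | supD K x y ≤ c} := by
  simp only [supD_le_iff hc, ofPred_forall]
  exact isClosed_biInter fun g _ ↦
    isClosed_le ((continuous_const_smul g).dist continuous_const) continuous_const

theorem isOpen_setOf_forall_dist_smul_lt [SMul G X] [ContinuousConstSMul G X] {W : Set G}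
    (hW : W.Finite) (y : X) (r : ℝ) : IsOpen {x : X | ∀ w ∈ W, dist (w • x) (w • y) < r} := by
  simp only [ofPred_forall]
  exact hW.isOpen_biInter fun w _ ↦
    isOpen_lt ((continuous_const_smul w).dist continuous_const) continuous_const

theorem exists_forall_dist_smul_smul_lt [Monoid G] [MulAction G X] [ContinuousConstSMul G X]
    {y z : X} (hy : y ∈ closure (MulAction.orbit G z)) {W : Set G} (hW : W.Finite) {r : ℝ}
    (hr : 0 < r) : ∃ u : G, ∀ w ∈ W, dist (w • u • z) (w • y) < r := by
  obtain ⟨_, hu, u, rfl⟩ := mem_closure_iff.1 hy _ (isOpen_setOf_forall_dist_smul_lt hW y r)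
    fun w _ ↦ by rwa [dist_self]
  exact ⟨u, hu⟩

end PseudoMetric

/-- `(x, y)` is an `ε`-asymptotic pair; thus `Asymptotic G x y` says that `(x, y)` is
`ε`-asymptotic for every `ε > 0`. -/
def EpsAsymptotic (G : Type*) {X : Type*} [SMul G X] [PseudoMetricSpace X] (ε : ℝ) (x y : X) :
    Prop :=
  ∃ F : Finset G, ∀ g ∉ F, dist (g • x) (g • y) ≤ ε

section UniformMemory

variable {G X : Type*} [Group G] [PseudoMetricSpace X] [CompactSpace X] [MulAction G X]
  [ContinuousConstSMul G X] {ε δ : ℝ}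

theorem IsUniformMemorySet.exists_forall_supD_le {A B : Finset G} (hε : 0 ≤ ε)
    (hB : IsUniformMemorySet G X ε δ A B) {V : Set G} (hV : Separated (B : Set G) V)
    (xv : G → X) (y : X)
    (hxv : ∀ v ∈ V, supD (((B : Set G) \ (A : Set G)) * {v}) (xv v) y ≤ δ) :
    ∃ z : X, ∀ v ∈ V, supD ((B : Set G) * {v}) z (xv v) ≤ ε := by
  have hfin : (univ ∩ ⋂ v : V, {z | supD ((B : Set G) * {(v : G)}) z (xv v) ≤ ε}).Nonempty := by
    refine isCompact_univ.inter_iInter_nonempty _ (fun v ↦ isClosed_setOf_supD_le _ _ hε)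
      fun t ↦ ?_
    have htV : ∀ v ∈ t.map (Function.Embedding.subtype _), v ∈ V :=
      fun v ↦ Finset.property_of_mem_map_subtype t
    obtain ⟨z, hz, -⟩ := hB.2 _ (hV.mono htV) xv y fun v hv ↦ hxv v (htV v hv)
    exact ⟨z, mem_univ z, mem_iInter₂.2 fun v hv ↦ hz v (Finset.mem_map_of_mem _ hv)⟩
  obtain ⟨z, -, hz⟩ := hfin
  exact ⟨z, fun v hv ↦ mem_iInter.1 hz ⟨v, hv⟩⟩

theorem EpsAsymptotic.exists_isSyndetic_forall_exists_coding {x₁ x₂ : X}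
    (hasymp : EpsAsymptotic G (δ / 2) x₁ x₂) (hδ : 0 < δ) (hε : 0 ≤ ε)
    (hmem : ∀ A : Finset G, ∃ B, IsUniformMemorySet G X ε δ A B)
    (hmin : IsMinimalSub G X (closure (MulAction.orbit G x₁))) :
    ∃ V : Set G, IsSyndetic V ∧ ∀ S : Set G, ∃ z : X, ∀ v ∈ V,
      (v ∈ S → dist (v • z) x₂ ≤ ε) ∧ (v ∉ S → dist (v • z) x₁ ≤ ε) := by
  classical
  obtain ⟨A, hA⟩ := hasymp
  obtain ⟨B, hB⟩ := hmem (insert 1 A)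
  have h1B : (1 : G) ∈ (B : Set G) := hB.1.1 (by simp)
  have hx₁ := subset_closure (MulAction.mem_orbit_self (M := G) x₁)
  have hret := hmin.isSyndetic_setOf_smul_mem isClosed_closure.isCompact hx₁
    (isOpen_setOf_forall_dist_smul_lt B.finite_toSet x₁ (δ / 2))
    ⟨x₁, hx₁, fun b _ ↦ by rw [dist_self]; positivity⟩
  obtain ⟨V, hVret, hVsep, hV⟩ := hret.exists_separated_subset B.finite_toSet ⟨1, h1B⟩
  refine ⟨V, hV, fun S ↦ ?_⟩
  obtain ⟨z, hz⟩ := hB.exists_forall_supD_le hε hVsep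
    (fun v ↦ v⁻¹ • if v ∈ S then x₂ else x₁) x₁ fun v hv ↦ by
      rw [supD_le_iff hδ.le]
      rintro _ ⟨b, ⟨hbB, hbA⟩, v, rfl, rfl⟩
      have hreturn : dist (b • v • x₁) (b • x₁) < δ / 2 := hVret hv b hbB
      have hclose : dist (b • x₁) (b • x₂) ≤ δ / 2 := hA b fun hb ↦ hbA (by simp [hb])
      simp only [mul_smul, smul_inv_smul]
      split_ifs
      · linarith [dist_triangle_right (b • x₂) (b • v • x₁) (b • x₁),
          dist_comm (b • x₁) (b • x₂)]
      · linarith [dist_comm (b • x₁) (b • v • x₁)]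
  have hzv : ∀ v ∈ V, dist (v • z) (if v ∈ S then x₂ else x₁) ≤ ε := fun v hv ↦ by
    simpa using (supD_le_iff hε).1 (hz v hv) v ⟨1, h1B, v, rfl, one_mul v⟩
  exact ⟨z, fun v hv ↦ ⟨fun hS ↦ by simpa [hS] using hzv v hv,
    fun hS ↦ by simpa [hS] using hzv v hv⟩⟩

end UniformMemory

theorem stmt9_general {G X : Type*} [Group G] [Infinite G] [PseudoMetricSpace X] [CompactSpace X]
    [MulAction G X] [ContinuousConstSMul G X] (hfin : {Y : Set X | IsMinimalSub G X Y}.Finite)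
    (hutmp : UniformTMP G X) {ε : ℝ} (hε : 0 < ε) :
    ∃ η > 0, ∀ x₁ x₂ : X, EpsAsymptotic G η x₁ x₂ →
      IsMinimalSub G X (closure (MulAction.orbit G x₁)) → dist x₁ x₂ ≤ ε := by
  obtain ⟨δ, hδ, hmem⟩ := hutmp (ε / 4) (by positivity)
  refine ⟨δ / 2, by positivity, fun x₁ x₂ hasymp hmin ↦ ?_⟩
  by_contra! hlt
  obtain ⟨V, hV, hcode⟩ :=
    hasymp.exists_isSyndetic_forall_exists_coding hδ (by positivity) hmem hmin
  have := hfin.to_subtype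
  choose q hq using fun M : {Y : Set X | IsMinimalSub G X Y} ↦ M.2.1
  obtain ⟨S, W, hW, hSW⟩ := hV.exists_set_forall_exists_not_mem_iff
    fun M ↦ {g : G | dist (g • q M) x₂ < ε / 2}
  obtain ⟨z, hz⟩ := hcode S
  obtain ⟨M, hMz, hM⟩ := exists_isMinimalSub_subset (MulAction.nonempty_orbit (M := G) z).closure
    isClosed_closure fun g _ ↦ smul_mem_closure_orbit g
  obtain ⟨u, hu⟩ :=
    exists_forall_dist_smul_smul_lt (hMz (hq ⟨M, hM⟩)) hW (by positivity : 0 < ε / 4)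
  obtain ⟨w, hw, hwV, hdiff⟩ := hSW u ⟨M, hM⟩
  have hclose : dist (w • q ⟨M, hM⟩) ((w * u) • z) < ε / 4 := by
    simpa only [dist_comm, mul_smul] using hu w hw
  refine hdiff ⟨fun hS ↦ ?_, fun hP ↦ by_contra fun hS ↦ ?_⟩
  · change dist (w • q ⟨M, hM⟩) x₂ < ε / 2
    linarith [dist_triangle (w • q ⟨M, hM⟩) ((w * u) • z) x₂, (hz _ hwV).1 hS]
  · change dist (w • q ⟨M, hM⟩) x₂ < ε / 2 at hP
    linarith [dist_triangle (w • q ⟨M, hM⟩) ((w * u) • z) x₁, (hz _ hwV).2 hS,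
      dist_triangle_left x₁ x₂ (w • q ⟨M, hM⟩)]

/-- If an action has only finitely many minimal closed invariant subsets and
has the uniform TMP, then there is no off-diagonal asymptotic pair `(x₁,x₂)` with the orbit
closure of `x₁` minimal. -/
theorem stmt9 (G X : Type*) [Group G] [Countable G] [Infinite G]
    [MetricSpace X] [CompactSpace X] [MulAction G X]
    (hcont : ∀ g : G, Continuous fun x : X => g • x)
    (hfin : {Y : Set X | IsMinimalSub G X Y}.Finite)
    (hutmp : UniformTMP G X) :
    ∀ x₁ x₂ : X, Asymptotic G x₁ x₂ →
      IsMinimalSub G X (closure (MulAction.orbit G x₁)) → x₁ = x₂ := by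
  have : ContinuousConstSMul G X := ⟨hcont⟩
  exact fun x₁ x₂ hasymp hmin ↦ eq_of_forall_dist_le fun ε hε ↦
    let ⟨η, hη, h⟩ := stmt9_general hfin hutmp hε
    h x₁ x₂ (hasymp η hη) hmin
end

section
/- Let Λ be a nonempty finite set, X ⊆ Λ^G a G-subshift, and μ a Markovian Borel probability measure on X. Then the shift action of G on the support of μ has the strong topological Markov property. -/
open Pointwise

/-- The left shift action of `G` on configurations `G → Λ`, `(g • x) h = x (g⁻¹ h)`. -/
instance shiftAction (G Λ : Type*) [Group G] : MulAction G (G → Λ) where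
  smul g x := fun h => x (g⁻¹ * h)
  one_smul x := by
    funext h; show x (1⁻¹ * h) = x h; simp
  mul_smul g₁ g₂ x := by
    funext h; show x ((g₁ * g₂)⁻¹ * h) = x (g₂⁻¹ * (g₁⁻¹ * h)); simp [mul_inv_rev, mul_assoc]

/-- The cylinder set of configurations agreeing with `p` on `S`. -/
def cylinder {G Λ : Type*} (S : Set G) (p : G → Λ) : Set (G → Λ) :=
  {y | ∀ g ∈ S, y g = p g}

/-- The (topological) support of a measure. -/
def measSupport {α : Type*} [TopologicalSpace α] [MeasurableSpace α]
    (μ : MeasureTheory.Measure α) : Set α :=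
  {x | ∀ U : Set α, IsOpen U → x ∈ U → 0 < μ U}

/-!
The support of a Markovian measure is a topological Markov field: if `x` and `y` lie in the support
and agree on `A * F \ A`, then so does the configuration `z` equal to `x` on `A` and to `y` off `A`.
Indeed, conditionally on `y` off `A`, the pattern of `x` on `A` has positive probability inside
`A * F`, where `y` may be exchanged for `x`, and by the Markov property this probability does not
change when `A * F` is enlarged.

Passing from sites to the metric, `d(g x, g y)` is small iff `g x` and `g y` agree on a finite
window `K`, that is, iff `x` and `y` agree on `g⁻¹ K`. Splicing `x` and `y` along the finite set of
sites `h` such that `h ∈ g⁻¹ K` only for `g ∈ A` leaves `g y` unchanged on `K` for every `g ∉ A`,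
and leaves `g x` unchanged on `K` for every `g ∈ K F⁻¹ K⁻¹ A`: every other site of `A⁻¹ K F` lies in
`g⁻¹ K` for some `g ∈ K F⁻¹ K⁻¹ A \ A`, so `x` and `y` agree there.
-/

section Cylinder

variable {ι Λ : Type*}

theorem cylinder_congr {S : Set ι} {x y : ι → Λ} (hxy : x ∈ cylinder S y) :
    cylinder S x = cylinder S y :=
  Set.ext fun w => forall₂_congr fun h hh => by rw [hxy h hh]

theorem cylinder_piecewise [DecidableEq ι] {A : Finset ι} {S : Set ι} (hAS : (A : Set ι) ⊆ S)
    (x y : ι → Λ) :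
    cylinder S (A.piecewise x y) = cylinder (A : Set ι) x ∩ cylinder (S \ A) y := by
  ext w
  refine ⟨fun hw => ⟨fun h hh => ?_, fun h hh => ?_⟩, fun hw h hh => ?_⟩
  · rw [hw h (hAS hh), A.piecewise_eq_of_mem _ _ hh]
  · rw [hw h hh.1, A.piecewise_eq_of_notMem _ _ hh.2]
  · by_cases hA : h ∈ A
    · rw [hw.1 h hA, A.piecewise_eq_of_mem _ _ hA]
    · rw [hw.2 h ⟨hh, hA⟩, A.piecewise_eq_of_notMem _ _ hA]

open scoped Uniformity

theorem hasBasis_uniformity_cylinder [u : UniformSpace (ι → Λ)]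
    (hu : u = @Pi.uniformSpace ι (fun _ => Λ) (fun _ => ⊥)) :
    (𝓤 (ι → Λ)).HasBasis (fun _ : Finset ι => True)
      fun S => {q | q.1 ∈ cylinder (S : Set ι) q.2} := by
  have uniformity_eq :
      𝓤 (ι → Λ) = ⨅ i, Filter.principal {q : (ι → Λ) × (ι → Λ) | q.1 i = q.2 i} := by
    subst hu
    rw [@Pi.uniformity]
    simp only [bot_uniformity, Filter.comap_principal]
    rfl
  rw [uniformity_eq]
  refine (Filter.hasBasis_iInf_principal_finite _).to_hasBasis
    (fun t ht => ⟨ht.toFinset, trivial, fun q hq => ?_⟩)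
    fun S _ => ⟨S, S.finite_toSet, fun q hq => ?_⟩
  · exact Set.mem_iInter₂.2 fun i hi => hq i (ht.mem_toFinset.2 hi)
  · exact Set.mem_iInter₂.1 hq

theorem hasBasis_nhds_cylinder [t : TopologicalSpace (ι → Λ)]
    (ht : t = @Pi.topologicalSpace ι (fun _ => Λ) (fun _ => ⊥)) (x : ι → Λ) :
    (nhds x).HasBasis (fun _ : Finset ι => True) fun S => cylinder (S : Set ι) x := by
  subst ht
  let _ : UniformSpace (ι → Λ) := @Pi.uniformSpace ι (fun _ => Λ) (fun _ => ⊥)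
  exact nhds_basis_uniformity (hasBasis_uniformity_cylinder rfl)

end Cylinder

section Support

open MeasureTheory (Measure)

theorem measSupport_eq_support {α : Type*} [TopologicalSpace α] [MeasurableSpace α]
    (μ : Measure α) : measSupport μ = μ.support := by
  rw [Measure.support_eq_forall_isOpen]
  exact Set.ext fun x => forall_congr' fun U => forall_comm

theorem mem_measSupport_iff_forall_cylinder {ι Λ : Type*} [t : TopologicalSpace (ι → Λ)]
    [MeasurableSpace (ι → Λ)] (ht : t = @Pi.topologicalSpace ι (fun _ => Λ) (fun _ => ⊥))
    {μ : Measure (ι → Λ)} {x : ι → Λ} :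
    x ∈ measSupport μ ↔ ∀ S : Finset ι, 0 < μ (cylinder (S : Set ι) x) := by
  rw [measSupport_eq_support, (hasBasis_nhds_cylinder ht x).mem_measureSupport]
  exact forall_congr' fun S => forall_const True

end Support

section MarkovField

open MeasureTheory (Measure IsFiniteMeasure measure_mono measure_ne_top)

variable {G Λ : Type*} [Group G] [DecidableEq G]

/-- The Markovian property of `μ` with a given memory window `F`. The conditional probabilities are
written as quotients of measures of cylinders. -/
def IsMarkovianWith [TopologicalSpace (G → Λ)] [MeasurableSpace (G → Λ)]
    (F : Finset G) (μ : Measure (G → Λ)) : Prop :=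
  ∀ A : Finset G, ∀ p : G → Λ, ∀ x ∈ measSupport μ, ∀ B : Finset G, A * F ⊆ B →
    μ (cylinder (A : Set G) p ∩ cylinder ((B : Set G) \ A) x) / μ (cylinder ((B : Set G) \ A) x) =
      μ (cylinder (A : Set G) p ∩ cylinder (((A * F : Finset G) : Set G) \ A) x) /
        μ (cylinder (((A * F : Finset G) : Set G) \ A) x)

/-- A set of configurations is a topological Markov field with window `F` if two of its members that
agree on the boundary `A * F \ A` of a finite set `A` can be spliced along `A`. -/
def IsTopologicalMarkovField (F : Finset G) (Y : Set (G → Λ)) : Prop :=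
  ∀ A : Finset G, ∀ x ∈ Y, ∀ y ∈ Y, x ∈ cylinder (((A * F : Finset G) : Set G) \ A) y →
    A.piecewise x y ∈ Y

theorem IsMarkovianWith.measure_cylinder_inter_pos [TopologicalSpace (G → Λ)]
    [MeasurableSpace (G → Λ)] {F : Finset G} {μ : Measure (G → Λ)} [IsFiniteMeasure μ]
    (hμ : IsMarkovianWith F μ) {A B : Finset G} (hB : A * F ⊆ B) {p y : G → Λ}
    (hy : y ∈ measSupport μ)
    (hpos : 0 < μ (cylinder (A : Set G) p ∩ cylinder (((A * F : Finset G) : Set G) \ A) y)) :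
    0 < μ (cylinder (A : Set G) p ∩ cylinder ((B : Set G) \ A) y) := by
  have cond_pos := ENNReal.div_pos hpos.ne' (measure_ne_top μ (cylinder (↑(A * F) \ ↑A) y))
  rw [← hμ A p y hy B hB] at cond_pos
  exact pos_iff_ne_zero.2 (ENNReal.div_pos_iff.1 cond_pos).1

theorem IsMarkovianWith.isTopologicalMarkovField_measSupport [t : TopologicalSpace (G → Λ)]
    [MeasurableSpace (G → Λ)] (ht : t = @Pi.topologicalSpace G (fun _ => Λ) (fun _ => ⊥))
    {F : Finset G} (hF : 1 ∈ F) {μ : Measure (G → Λ)} [IsFiniteMeasure μ]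
    (hμ : IsMarkovianWith F μ) : IsTopologicalMarkovField F (measSupport μ) := by
  intro A x hx y hy hxy
  have subset_mul : A ⊆ A * F := Finset.subset_mul_left A hF
  have window_pos :
      0 < μ (cylinder (A : Set G) x ∩ cylinder (((A * F : Finset G) : Set G) \ A) y) := by
    rw [← cylinder_congr hxy, ← cylinder_piecewise (Finset.coe_subset.2 subset_mul),
      Finset.piecewise_same]
    exact (mem_measSupport_iff_forall_cylinder ht).1 hx (A * F)
  refine (mem_measSupport_iff_forall_cylinder ht).2 fun S => ?_
  have subset_union : A * F ⊆ S ∪ A * F := Finset.subset_union_right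
  have spliced_pos := hμ.measure_cylinder_inter_pos subset_union hy window_pos
  rw [← cylinder_piecewise (Finset.coe_subset.2 (subset_mul.trans subset_union))] at spliced_pos
  exact spliced_pos.trans_le <| measure_mono fun w hw h hh =>
    hw h (Finset.mem_coe.2 (Finset.mem_union_left _ hh))

end MarkovField

section Supremum

variable {M : Type*}

theorem supD_le {X : Type*} [SMul M X] [PseudoMetricSpace X] {S : Set M} {x y : X} {ε : ℝ}
    (hε : 0 ≤ ε) (h : ∀ g ∈ S, dist (g • x) (g • y) ≤ ε) : supD S x y ≤ ε :=
  Real.iSup_le (fun g => h g g.2) hε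

theorem dist_smul_le_supD {X : Type*} [SMul M X] [PseudoMetricSpace X] [BoundedSpace X]
    {S : Set M} {g : M} (hg : g ∈ S) (x y : X) : dist (g • x) (g • y) ≤ supD S x y :=
  le_ciSup (f := fun g : S => dist ((g : M) • x) ((g : M) • y))
    ⟨Metric.diam (Set.univ : Set X), Set.forall_mem_range.2 fun _ =>
      Metric.dist_le_diam_of_mem (Bornology.isBounded_univ.2 ‹_›) (Set.mem_univ _) (Set.mem_univ _)⟩
    ⟨g, hg⟩

variable {ι Λ : Type*} [SMul M (ι → Λ)] [m : PseudoMetricSpace (ι → Λ)]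

theorem exists_finset_nonempty_supD_le [Nonempty ι]
    (hm : m.toUniformSpace = @Pi.uniformSpace ι (fun _ => Λ) (fun _ => ⊥)) {ε : ℝ} (hε : 0 < ε) :
    ∃ K : Finset ι, K.Nonempty ∧ ∀ (S : Set M) (x y : ι → Λ),
      (∀ g ∈ S, g • x ∈ cylinder (K : Set ι) (g • y)) → supD S x y ≤ ε := by
  classical
  obtain ⟨K, -, hK⟩ := (hasBasis_uniformity_cylinder hm).mem_iff.1
    (Metric.uniformity_basis_dist_le.mem_of_mem hε)
  exact ⟨insert (Classical.arbitrary ι) K, Finset.insert_nonempty _ _, fun S x y hxy =>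
    supD_le hε.le fun g hg => @hK (g • x, g • y) fun i hi =>
      hxy g hg i (Finset.mem_insert_of_mem hi)⟩

theorem exists_pos_forall_mem_cylinder_of_supD_le [BoundedSpace (ι → Λ)]
    (hm : m.toUniformSpace = @Pi.uniformSpace ι (fun _ => Λ) (fun _ => ⊥)) (K : Finset ι) :
    ∃ δ > (0 : ℝ), ∀ (S : Set M) (x y : ι → Λ), supD S x y ≤ δ →
      ∀ g ∈ S, g • x ∈ cylinder (K : Set ι) (g • y) := by
  obtain ⟨δ, hδ, hK⟩ := Metric.uniformity_basis_dist_le.mem_iff.1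
    ((hasBasis_uniformity_cylinder hm).mem_of_mem (i := K) trivial)
  exact ⟨δ, hδ, fun S x y hxy g hg =>
    @hK (g • x, g • y) ((dist_smul_le_supD hg x y).trans hxy)⟩

end Supremum

section Splicing

variable {G Λ : Type*} [Group G] {x y : G → Λ}

theorem smul_mem_cylinder_iff {S : Set G} {g : G} :
    g • x ∈ cylinder S (g • y) ↔ ∀ k ∈ S, x (g⁻¹ * k) = y (g⁻¹ * k) :=
  Iff.rfl

variable [DecidableEq G] {K F A : Finset G}

/-- The sites which a translate `g • x` brings into the window `K` only for `g ∈ A`: the site `h`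
is moved to `k ∈ K` by `g = k * h⁻¹`. Along these sites a configuration can be changed without
affecting `g • x` on `K` for `g ∉ A`. -/
def confinedSites (K A : Finset G) : Finset G :=
  {h ∈ A⁻¹ * K | ∀ k ∈ K, k * h⁻¹ ∈ A}

theorem mem_confinedSites (hK : K.Nonempty) {h : G} :
    h ∈ confinedSites K A ↔ ∀ k ∈ K, k * h⁻¹ ∈ A := by
  refine Finset.mem_filter.trans (and_iff_right_of_imp fun hA => ?_)
  obtain ⟨k, hk⟩ := hK
  exact Finset.mem_mul.2 ⟨(k * h⁻¹)⁻¹, Finset.inv_mem_inv (hA k hk), k, hk, by group⟩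

theorem smul_mem_cylinder_piecewise_confinedSites {g : G} (hg : g ∉ A) :
    g • y ∈ cylinder (K : Set G) (g • (confinedSites K A).piecewise x y) := by
  refine smul_mem_cylinder_iff.2 fun k hk => (Finset.piecewise_eq_of_notMem _ _ _ fun hC => ?_).symm
  have mem_A := (Finset.mem_filter.1 hC).2 k hk
  rw [mul_inv_rev, inv_inv, mul_inv_cancel_left] at mem_A
  exact hg mem_A

theorem apply_eq_of_notMem_confinedSites (hK : K.Nonempty)
    (hxy : ∀ g ∈ K * F⁻¹ * K⁻¹ * A, g ∉ A → g • x ∈ cylinder (K : Set G) (g • y)) {h : G}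
    (hnear : h ∈ A⁻¹ * K * F) (hh : h ∉ confinedSites K A) : x h = y h := by
  obtain ⟨k', hk', hA⟩ : ∃ k' ∈ K, k' * h⁻¹ ∉ A := by
    simpa only [mem_confinedSites hK, not_forall, exists_prop] using hh
  have mem_window : k' * h⁻¹ ∈ K * F⁻¹ * K⁻¹ * A := by
    have inv_mem : h⁻¹ ∈ F⁻¹ * (K⁻¹ * A) := by
      simpa only [mul_inv_rev, inv_inv] using Finset.inv_mem_inv hnear
    simpa only [mul_assoc] using Finset.mul_mem_mul hk' inv_mem
  have agree := smul_mem_cylinder_iff.1 (hxy _ mem_window hA) k' hk'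
  rwa [mul_inv_rev, inv_inv, inv_mul_cancel_right] at agree

theorem mem_cylinder_boundary_confinedSites (hK : K.Nonempty)
    (hxy : ∀ g ∈ K * F⁻¹ * K⁻¹ * A, g ∉ A → g • x ∈ cylinder (K : Set G) (g • y)) :
    x ∈ cylinder (((confinedSites K A * F : Finset G) : Set G) \ confinedSites K A) y :=
  fun _ hh => apply_eq_of_notMem_confinedSites hK hxy
    (Finset.mul_subset_mul_right (Finset.filter_subset _ _) hh.1) hh.2

theorem smul_mem_cylinder_piecewise_of_mem_mul (hK : K.Nonempty) (hF : 1 ∈ F)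
    (hxy : ∀ g ∈ K * F⁻¹ * K⁻¹ * A, g ∉ A → g • x ∈ cylinder (K : Set G) (g • y)) {g : G}
    (hg : g ∈ K * F⁻¹ * K⁻¹ * A) :
    g • x ∈ cylinder (K : Set G) (g • (confinedSites K A).piecewise x y) := by
  refine smul_mem_cylinder_iff.2 fun k hk => ?_
  by_cases hC : g⁻¹ * k ∈ confinedSites K A
  · rw [Finset.piecewise_eq_of_mem _ _ _ hC]
  rw [Finset.piecewise_eq_of_notMem _ _ _ hC]
  by_cases hA : g ∈ A
  · have near : g⁻¹ * k ∈ A⁻¹ * K * F :=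
      Finset.subset_mul_left _ hF (Finset.mul_mem_mul (Finset.inv_mem_inv hA) hk)
    exact apply_eq_of_notMem_confinedSites hK hxy near hC
  · exact smul_mem_cylinder_iff.1 (hxy g hg hA) k hk

end Splicing

section StrongTMP

/-- The strong topological Markov property of the action restricted to `Y`, with memory sets in
the ambient space, so that `Y` need not be known to be invariant. -/
def StrongTMPOn (G : Type*) {X : Type*} [Group G] [DecidableEq G] [MulAction G X]
    [PseudoMetricSpace X] (Y : Set X) : Prop :=
  ∀ ε > (0 : ℝ), ∃ δ > (0 : ℝ), ∃ F : Finset G, (1 : G) ∈ F ∧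
    ∀ A : Finset G, ∀ x ∈ Y, ∀ y ∈ Y, supD (((F * A : Finset G) : Set G) \ A) x y ≤ δ →
      ∃ z ∈ Y, supD ((F * A : Finset G) : Set G) x z ≤ ε ∧ supD (Set.univ \ (A : Set G)) y z ≤ ε

variable {G Λ : Type*} [Group G] [DecidableEq G]

theorem IsTopologicalMarkovField.strongTMPOn [m : PseudoMetricSpace (G → Λ)]
    [BoundedSpace (G → Λ)] (hm : m.toUniformSpace = @Pi.uniformSpace G (fun _ => Λ) (fun _ => ⊥))
    {F : Finset G} (hF : 1 ∈ F) {Y : Set (G → Λ)} (hY : IsTopologicalMarkovField F Y) :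
    StrongTMPOn G Y := by
  intro ε hε
  obtain ⟨K, hK, supD_le_of_agree⟩ := exists_finset_nonempty_supD_le (M := G) hm hε
  obtain ⟨δ, hδ, agree_of_supD_le⟩ := exists_pos_forall_mem_cylinder_of_supD_le (M := G) hm K
  have one_mem : 1 ∈ K * F⁻¹ * K⁻¹ := by
    obtain ⟨k, hk⟩ := hK
    simpa using Finset.mul_mem_mul (Finset.mul_mem_mul hk (Finset.inv_mem_inv hF))
      (Finset.inv_mem_inv hk)
  refine ⟨δ, hδ, K * F⁻¹ * K⁻¹, one_mem, fun A x hx y hy hxy => ?_⟩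
  have agree : ∀ g ∈ K * F⁻¹ * K⁻¹ * A, g ∉ A → g • x ∈ cylinder (K : Set G) (g • y) :=
    fun g hg hgA => agree_of_supD_le _ x y hxy g ⟨hg, hgA⟩
  exact ⟨(confinedSites K A).piecewise x y,
    hY _ x hx y hy (mem_cylinder_boundary_confinedSites hK agree),
    supD_le_of_agree _ _ _ fun g hg => smul_mem_cylinder_piecewise_of_mem_mul hK hF agree hg,
    supD_le_of_agree _ _ _ fun g hg => smul_mem_cylinder_piecewise_confinedSites hg.2⟩

theorem stmt16_general [m : PseudoMetricSpace (G → Λ)] [BoundedSpace (G → Λ)]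
    [MeasurableSpace (G → Λ)]
    (hm : m.toUniformSpace = @Pi.uniformSpace G (fun _ => Λ) (fun _ => ⊥))
    {μ : MeasureTheory.Measure (G → Λ)} [MeasureTheory.IsFiniteMeasure μ]
    {F : Finset G} (hF : 1 ∈ F) (hμ : IsMarkovianWith F μ) : StrongTMPOn G (measSupport μ) :=
  (hμ.isTopologicalMarkovField_measSupport (congrArg (·.toTopologicalSpace) hm) hF).strongTMPOn
    hm hF

end StrongTMP

/-- Let `X ⊆ Λ^G` be a `G`-subshift and `μ` a Markovian Borel probability
measure on `X`.  Then the shift action of `G` on the support of `μ` has the strong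
topological Markov property. -/
theorem stmt16 (G Λ : Type*) [Group G] [Countable G] [Infinite G] [DecidableEq G]
    [Fintype Λ] [Nonempty Λ]
    [MetricSpace (G → Λ)] [CompactSpace (G → Λ)]
    [MeasurableSpace (G → Λ)] [BorelSpace (G → Λ)]
    (hcompat : (inferInstance : TopologicalSpace (G → Λ)) =
      @Pi.topologicalSpace G (fun _ => Λ) (fun _ => ⊥))
    (X : Set (G → Λ)) (hXclosed : IsClosed X)
    (hXinv : ∀ g : G, ∀ x ∈ X, g • x ∈ X)
    (μ : MeasureTheory.Measure (G → Λ)) [MeasureTheory.IsProbabilityMeasure μ]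
    (hμX : μ X = 1)
    (hMarkov : ∃ F : Finset G, (1 : G) ∈ F ∧
      ∀ A : Finset G, ∀ p : G → Λ, ∀ x ∈ measSupport μ,
        ∀ B : Finset G, A * F ⊆ B →
          μ (cylinder (A : Set G) p ∩ cylinder (((B : Finset G) : Set G) \ (A : Set G)) x) /
              μ (cylinder (((B : Finset G) : Set G) \ (A : Set G)) x) =
            μ (cylinder (A : Set G) p ∩
                cylinder (((A * F : Finset G) : Set G) \ (A : Set G)) x) /
              μ (cylinder (((A * F : Finset G) : Set G) \ (A : Set G)) x)) :
    ∀ ε > (0 : ℝ), ∃ δ > (0 : ℝ), ∃ F : Finset G, (1 : G) ∈ F ∧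
      ∀ A : Finset G, ∀ x ∈ measSupport μ, ∀ y ∈ measSupport μ,
        supD (((F * A : Finset G) : Set G) \ (A : Set G)) x y ≤ δ →
        ∃ z ∈ measSupport μ,
          supD ((F * A : Finset G) : Set G) x z ≤ ε ∧
          supD (Set.univ \ (A : Set G)) y z ≤ ε := by
  obtain ⟨F, hF, hμ⟩ := hMarkov
  exact stmt16_general (unique_uniformity_of_compact rfl hcompat.symm) hF hμ
end

section
/- Let F₂ be the free group on two generators a,b and let X_pm ⊆ {a,b,a⁻¹,b⁻¹}^{F₂} be the perfect matchings subshift, consisting of all x such that (x(g))⁻¹ = x(g·x(g)) for every g ∈ F₂. Then the shift action F₂ ↷ X_pm has no off-diagonal asymptotic pairs. -/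
/-- The alphabet `{a, b, a⁻¹, b⁻¹}` inside the free group `F₂` on two generators. -/
def pmAlphabet : Set (FreeGroup (Fin 2)) :=
  {FreeGroup.of 0, FreeGroup.of 1, (FreeGroup.of 0)⁻¹, (FreeGroup.of 1)⁻¹}

/-- The perfect matchings subshift `X_pm ⊆ {a,b,a⁻¹,b⁻¹}^{F₂}`: configurations `x` with
`(x g)⁻¹ = x (g * x g)` for all `g ∈ F₂`. -/
def Xpm : Set (FreeGroup (Fin 2) → FreeGroup (Fin 2)) :=
  {x | (∀ g, x g ∈ pmAlphabet) ∧ ∀ g, (x g)⁻¹ = x (g * x g)}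

/-!
Two perfect matchings that differ at `g` also differ at both partners of `g`: had they the same
displacement at one partner, it would lead back to `g` along the same edge. These partners are
distinct neighbours of `g` in the Cayley graph of the free group, which is a tree, so at least one
of them lies farther from the identity than `g`. Hence a nonempty set of disagreement contains
elements of arbitrarily large norm.
-/

section FreeGroupNorm

variable {α : Type*} [DecidableEq α]

theorem norm_mul_mk_singleton_of_notMem_getLast? {g : FreeGroup α} {l : α × Bool}
    (hl : (l.1, !l.2) ∉ g.toWord.getLast?) : (g * FreeGroup.mk [l]).norm = g.norm + 1 := by
  have reduced : FreeGroup.IsReduced (g.toWord ++ [l]) := by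
    refine List.isChain_append.mpr ⟨FreeGroup.isReduced_toWord, List.isChain_singleton l, ?_⟩
    rintro k hk _ ⟨rfl⟩ hfst
    by_contra hsnd
    have cancelling : k = (l.1, !l.2) := Prod.ext hfst (Bool.eq_not.mpr hsnd)
    exact hl (cancelling ▸ hk)
  calc (g * FreeGroup.mk [l]).norm = (FreeGroup.mk (g.toWord ++ [l])).norm := by
        rw [← FreeGroup.mul_mk, FreeGroup.mk_toWord]
    _ = (g.toWord ++ [l]).length := by
        rw [FreeGroup.norm, FreeGroup.toWord_mk, reduced.reduce_eq]
    _ = g.norm + 1 := List.length_append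

theorem exists_eq_mk_singleton_of_norm_eq_one {u : FreeGroup α} (hu : u.norm = 1) :
    ∃ l, u = FreeGroup.mk [l] := by
  obtain ⟨l, hl⟩ := List.length_eq_one_iff.mp hu
  exact ⟨l, by rw [← hl, FreeGroup.mk_toWord]⟩

theorem eq_of_norm_mul_le_of_norm_eq_one {g u v : FreeGroup α} (hu : u.norm = 1)
    (hv : v.norm = 1) (hgu : (g * u).norm ≤ g.norm) (hgv : (g * v).norm ≤ g.norm) : u = v := by
  obtain ⟨l, rfl⟩ := exists_eq_mk_singleton_of_norm_eq_one hu
  obtain ⟨m, rfl⟩ := exists_eq_mk_singleton_of_norm_eq_one hv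
  have cancels {k : α × Bool} (hk : (g * FreeGroup.mk [k]).norm ≤ g.norm) :
      (k.1, !k.2) ∈ g.toWord.getLast? := by
    by_contra h
    have hgrow := norm_mul_mk_singleton_of_notMem_getLast? h
    lia
  obtain ⟨hfst, hsnd⟩ := Prod.mk.inj (Option.mem_unique (cancels hgu) (cancels hgv))
  rw [Prod.ext hfst (Bool.not_inj hsnd)]

end FreeGroupNorm

/-- A matching of the group `G`, encoded by its displacements: `g` is matched with `g * x g`, and
with itself where `x g = 1`. When `x` takes its values in a set of generators `S ∌ 1`, this is a
perfect matching of the Cayley graph of `G` with respect to `S`. -/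
def IsMatching {G : Type*} [Group G] (x : G → G) : Prop :=
  ∀ g, (x g)⁻¹ = x (g * x g)

theorem IsMatching.apply_mul_ne {G : Type*} [Group G] {x y : G → G} (hx : IsMatching x)
    (hy : IsMatching y) {g : G} (hg : x g ≠ y g) : x (g * x g) ≠ y (g * x g) := by
  intro heq
  have hback : y (g * x g) = (x g)⁻¹ := by rw [← heq, hx g]
  have hinv : x g = y g := by simpa [hback] using hy (g * x g)
  exact hg hinv

theorem IsMatching.exists_ne_norm_lt {α : Type*} [DecidableEq α]
    {x y : FreeGroup α → FreeGroup α} (hx : IsMatching x) (hy : IsMatching y)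
    (hx₁ : ∀ g, (x g).norm = 1) (hy₁ : ∀ g, (y g).norm = 1) {g : FreeGroup α}
    (hg : x g ≠ y g) : ∃ h, x h ≠ y h ∧ g.norm < h.norm := by
  by_contra! hmax
  have hgx := hmax (g * x g) (hx.apply_mul_ne hy hg)
  have hgy := hmax (g * y g) (hy.apply_mul_ne hx hg.symm).symm
  exact hg (eq_of_norm_mul_le_of_norm_eq_one (hx₁ g) (hy₁ g) hgx hgy)

theorem stmt17_general {α : Type*} [DecidableEq α] {x y : FreeGroup α → FreeGroup α}
    (hx : IsMatching x) (hy : IsMatching y)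
    (hx₁ : ∀ g, (x g).norm = 1) (hy₁ : ∀ g, (y g).norm = 1)
    (hbdd : BddAbove (FreeGroup.norm '' {g | x g ≠ y g})) : x = y := by
  by_contra hne
  obtain ⟨g, hg, hmax⟩ := Set.Finite.exists_maximalFor' FreeGroup.norm {g | x g ≠ y g}
    hbdd.finite (Function.ne_iff.mp hne)
  obtain ⟨h, hh, hlt⟩ := hx.exists_ne_norm_lt hy hx₁ hy₁ hg
  exact hlt.not_ge (hmax hh hlt.le)

theorem norm_eq_one_of_mem_pmAlphabet {s : FreeGroup (Fin 2)} (hs : s ∈ pmAlphabet) :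
    s.norm = 1 := by
  rcases hs with rfl | rfl | rfl | rfl <;> simp only [FreeGroup.norm_inv_eq, FreeGroup.norm_of]

/-- The shift action `F₂ ↷ X_pm` on the perfect matchings subshift has no
off-diagonal asymptotic pairs: if `x, y ∈ X_pm` agree outside a finite subset of `F₂` (which,
for subshifts, is equivalent to being an asymptotic pair), then `x = y`. -/
theorem stmt17 (x y : FreeGroup (Fin 2) → FreeGroup (Fin 2))
    (hx : x ∈ Xpm) (hy : y ∈ Xpm)
    (hasym : {g : FreeGroup (Fin 2) | x g ≠ y g}.Finite) :
    x = y :=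
  stmt17_general hx.2 hy.2 (fun g ↦ norm_eq_one_of_mem_pmAlphabet (hx.1 g))
    (fun g ↦ norm_eq_one_of_mem_pmAlphabet (hy.1 g)) (hasym.image FreeGroup.norm).bddAbove
end
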